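/- arXiv:2402.13645 — 3 statements merged into one kernel-verified Lean document; each statement's English description precedes it below -/
import Mathlib

section
/- Let n, N ≥ 1 be integers, r ≥ 1 an integer, and 0 ≤ k ≤ N. Then ℙ(μ_r(n,N) = k) = C(N,k)·p_r^k·(1-p_r)^{N-k}·ℙ(ζ_{N-k}^{(r)} = n - kr)/ℙ(ζ_N = n), where C(N,k) is the binomial coefficient (and where, for k·r > n, both sides are zero). -/
open MeasureTheory ProbabilityTheory Finset
open scoped ProbabilityTheory

/-- The law of `n` balls placed independently and uniformly at random into `N` boxes. -/
noncomputable def ballsInBoxes (n N : ℕ) : Measure (Fin n → Fin N) :=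
  Measure.pi fun _ : Fin n => ((N : ENNReal)⁻¹ • (Measure.count : Measure (Fin N)))

/-- The probability that a sum of `m` i.i.d. `Poisson(α)` random variables equals `l`,
i.e. `ℙ(ζ_m = l)`. -/
noncomputable def poissonSumProb (α : NNReal) (m l : ℕ) : ℝ :=
  ((Measure.pi fun _ : Fin m => poissonMeasure α) {x : Fin m → ℕ | ∑ i, x i = l}).toReal

/-- The probability that a sum of `m` i.i.d. random variables, each distributed as a `Poisson(α)`
variable conditioned on being `≠ r`, equals `l ∈ ℤ`, i.e. `ℙ(ζ_m^{(r)} = l)`. -/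
noncomputable def condPoissonSumProb (α : NNReal) (r : ℕ) (m : ℕ) (l : ℤ) : ℝ :=
  ((Measure.pi fun _ : Fin m => (poissonMeasure α)[|{r}ᶜ])
      {x : Fin m → ℕ | (∑ i, (x i : ℤ)) = l}).toReal

/-- Kolchin's exact formula:
`ℙ(μ_r(n,N) = k) = C(N,k)·p_r^k·(1-p_r)^{N-k}·ℙ(ζ_{N-k}^{(r)} = n-kr)/ℙ(ζ_N = n)`,
where `μ_r(n,N)` is the number of boxes containing exactly `r` of `n` balls placed independently
and uniformly at random into `N` boxes, `α = n/N`, and `p_r = α^r e^{-α}/r!`. -/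
lemma coeff_pow_piAntidiag {R : Type*} [CommSemiring R] (φ : PowerSeries R) (m d : ℕ) :
    PowerSeries.coeff d (φ ^ m) =
      ∑ c ∈ Finset.piAntidiag (Finset.univ : Finset (Fin m)) d,
        ∏ i, PowerSeries.coeff (c i) φ := by
  have h : φ ^ m = ∏ _i : Fin m, φ := by simp
  rw [h, PowerSeries.coeff_prod]
  refine Finset.sum_equiv Finsupp.equivFunOnFinite ?_ ?_
  · intro c
    simp [Finset.mem_finsuppAntidiag]
  · intro c _
    simp

lemma gf_identity (p : ℕ → ℝ) (n N r k : ℕ) (hk : k ≤ N) :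
    ∑ c ∈ (Finset.piAntidiag (Finset.univ : Finset (Fin N)) n) with
        (Finset.univ.filter fun i => c i = r).card = k, ∏ i, p (c i)
      = (N.choose k : ℝ) * p r ^ k * (if k * r ≤ n then
          ∑ d ∈ Finset.piAntidiag (Finset.univ : Finset (Fin (N - k))) (n - k * r),
            ∏ i, (if d i = r then 0 else p (d i)) else 0) := by
  classical
  let G : PowerSeries ℝ := PowerSeries.mk fun l => if l = r then 0 else p l
  let H : PowerSeries (Polynomial ℝ) :=
    PowerSeries.mk fun l => Polynomial.C (p l) * (if l = r then Polynomial.X else 1)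
  have hH : H = PowerSeries.C (Polynomial.C (p r) * Polynomial.X) * PowerSeries.X ^ r
      + PowerSeries.map Polynomial.C G := by
    ext1 l
    rw [map_add, PowerSeries.coeff_C_mul, PowerSeries.coeff_X_pow, PowerSeries.coeff_map]
    by_cases hl : l = r
    · subst hl; simp [H, G]
    · simp [H, G, hl]
  have h1 : (PowerSeries.coeff n (H ^ N)).coeff k =
      ∑ c ∈ (Finset.piAntidiag (Finset.univ : Finset (Fin N)) n) with
        (Finset.univ.filter fun i => c i = r).card = k, ∏ i, p (c i) := by
    rw [coeff_pow_piAntidiag, Polynomial.finsetSum_coeff, Finset.sum_filter]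
    refine Finset.sum_congr rfl fun c _ => ?_
    simp only [H, PowerSeries.coeff_mk, Finset.prod_mul_distrib]
    rw [← map_prod, Polynomial.coeff_C_mul, Finset.prod_ite, Finset.prod_const,
      Finset.prod_const_one, mul_one, Polynomial.coeff_X_pow]
    simp [eq_comm]
  rw [← h1, hH, add_pow, map_sum, Polynomial.finsetSum_coeff]
  have h2 : ∀ j ∈ Finset.range (N + 1),
      (PowerSeries.coeff n ((PowerSeries.C (Polynomial.C (p r) * Polynomial.X)
        * PowerSeries.X ^ r) ^ j * (PowerSeries.map Polynomial.C G) ^ (N - j)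
        * ((N.choose j : ℕ) : PowerSeries (Polynomial ℝ)))).coeff k
      = if j = k then (N.choose k : ℝ) * p r ^ k *
          PowerSeries.coeff n (PowerSeries.X ^ (k * r) * G ^ (N - k)) else 0 := by
    intro j _
    have e : (PowerSeries.C (Polynomial.C (p r) * Polynomial.X)
        * PowerSeries.X ^ r) ^ j * (PowerSeries.map Polynomial.C G) ^ (N - j)
        * ((N.choose j : ℕ) : PowerSeries (Polynomial ℝ)) =
        PowerSeries.C (Polynomial.C ((N.choose j : ℝ) * p r ^ j) * Polynomial.X ^ j) *
          PowerSeries.map Polynomial.C (PowerSeries.X ^ (j * r) * G ^ (N - j)) := by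
      simp only [map_mul, map_pow, mul_pow, map_natCast, PowerSeries.map_X]
      ring
    rw [e, PowerSeries.coeff_C_mul, PowerSeries.coeff_map, mul_assoc, Polynomial.coeff_C_mul,
      Polynomial.coeff_mul_C, Polynomial.coeff_X_pow]
    by_cases hj : j = k
    · subst hj; simp
    · simp [hj, Ne.symm hj]
  rw [Finset.sum_congr rfl h2, Finset.sum_ite_eq', if_pos (by simp; omega),
    PowerSeries.coeff_X_pow_mul', coeff_pow_piAntidiag]
  simp [G]

lemma card_fibre (n N : ℕ) (c : Fin N → ℕ)
    (hc : c ∈ Finset.piAntidiag (Finset.univ : Finset (Fin N)) n) :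
    (Finset.univ.filter fun X : Fin n → Fin N =>
      (fun i => (Finset.univ.filter fun s : Fin n => X s = i).card) = c).card
      = Nat.multinomial Finset.univ c := by
  classical
  have hp : ∀ c' : Fin N → ℕ, ∏ i, (MvPolynomial.X i : MvPolynomial (Fin N) ℕ) ^ c' i
      = MvPolynomial.monomial (Finsupp.equivFunOnFinite.symm c') 1 := by
    intro c'
    rw [MvPolynomial.monomial_eq, Finsupp.prod_fintype _ _ (by simp)]
    simp
  have hX : ∀ X : Fin n → Fin N, ∏ s, (MvPolynomial.X (X s) : MvPolynomial (Fin N) ℕ)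
      = ∏ i, MvPolynomial.X i ^ (Finset.univ.filter fun s : Fin n => X s = i).card := by
    intro X
    rw [← Finset.prod_fiberwise' (s := Finset.univ) (g := X)
      (f := fun i => (MvPolynomial.X i : MvPolynomial (Fin N) ℕ))]
    simp
  have key : (∑ X : Fin n → Fin N, ∏ s, (MvPolynomial.X (X s) : MvPolynomial (Fin N) ℕ))
      = (∑ i, MvPolynomial.X i) ^ n := by
    rw [Fintype.sum_pow]
  rw [Finset.sum_pow_eq_sum_piAntidiag] at key
  have k2 := congrArg (MvPolynomial.coeff (Finsupp.equivFunOnFinite.symm c)) key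
  simp only [hX, hp, MvPolynomial.coeff_sum] at k2
  simp only [← map_natCast (MvPolynomial.C (σ := Fin N) (R := ℕ)), MvPolynomial.coeff_C_mul,
    MvPolynomial.coeff_monomial, Finsupp.equivFunOnFinite.symm.injective.eq_iff] at k2
  rw [Finset.card_filter, k2]
  simp only [mul_ite, mul_one, mul_zero, Finset.sum_ite_eq', hc, if_true]
  simp

lemma count_sum (α : ℝ) (n N : ℕ) (Q : (Fin N → ℕ) → Prop) [DecidablePred Q] :
    ∑ c ∈ (Finset.piAntidiag (Finset.univ : Finset (Fin N)) n) with Q c,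
      ∏ i, (Real.exp (-α) * α ^ (c i) / (c i).factorial)
    = Real.exp (-α) ^ N * α ^ n / n.factorial * ((Finset.univ.filter fun X : Fin n → Fin N =>
      Q (fun i => (Finset.univ.filter fun s : Fin n => X s = i).card)).card : ℝ) := by
  classical
  have h1 : (Finset.univ.filter fun X : Fin n → Fin N =>
      Q (fun i => (Finset.univ.filter fun s : Fin n => X s = i).card)).card
      = ∑ c ∈ (Finset.piAntidiag (Finset.univ : Finset (Fin N)) n) with Q c,
        Nat.multinomial Finset.univ c := by
    rw [Finset.card_eq_sum_card_fiberwise (t := (Finset.piAntidiag Finset.univ n).filter Q)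
      (f := fun X i => (Finset.univ.filter fun s : Fin n => X s = i).card)]
    · refine Finset.sum_congr rfl fun c hc => ?_
      rw [Finset.mem_filter] at hc
      rw [← card_fibre n N c hc.1]
      congr 1
      ext X
      simp only [Finset.mem_filter, Finset.mem_univ, true_and]
      constructor
      · exact fun h => h.2
      · intro h
        exact ⟨h ▸ hc.2, h⟩
    · intro X hX
      simp only [Finset.coe_filter, Finset.mem_univ, true_and, Set.mem_ofPred_eq] at hX
      simp only [Finset.coe_filter, Set.mem_ofPred_eq, Finset.mem_piAntidiag]
      refine ⟨⟨?_, by simp⟩, hX⟩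
      rw [← Finset.card_eq_sum_card_fiberwise (by simp)]
      simp
  rw [h1, Nat.cast_sum, Finset.mul_sum]
  refine Finset.sum_congr rfl fun c hc => ?_
  rw [Finset.mem_filter, Finset.mem_piAntidiag] at hc
  have hs := Nat.multinomial_spec Finset.univ c
  rw [hc.1.1] at hs
  rw [Finset.prod_div_distrib, Finset.prod_mul_distrib, Finset.prod_pow_eq_pow_sum, hc.1.1, ← hs]
  have hne : (Nat.multinomial Finset.univ c : ℝ) ≠ 0 := by
    exact_mod_cast (Nat.multinomial_pos _ _).ne'
  have hne2 : ∏ i, ((c i).factorial : ℝ) ≠ 0 :=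
    Finset.prod_ne_zero_iff.2 fun i _ => by positivity
  push_cast
  simp only [Finset.prod_const, Finset.card_univ, Fintype.card_fin]
  field_simp

lemma pi_sum_prob (μ : Measure ℕ) [IsProbabilityMeasure μ] (m l : ℕ) :
    ((Measure.pi fun _ : Fin m => μ) {x : Fin m → ℕ | ∑ i, x i = l}).toReal
      = ∑ c ∈ Finset.piAntidiag (Finset.univ : Finset (Fin m)) l, ∏ i, μ.real {c i} := by
  have h : {x : Fin m → ℕ | ∑ i, x i = l}
      = ((Finset.piAntidiag (Finset.univ : Finset (Fin m)) l : Finset (Fin m → ℕ)) :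
        Set (Fin m → ℕ)) := by
    ext x; simp
  rw [h, ← Measure.real, ← sum_measureReal_singleton]
  refine Finset.sum_congr rfl fun c _ => ?_
  simp [Measure.real, ENNReal.toReal_prod]

lemma balls_prob (n N : ℕ) (hN : N ≠ 0) (Q : (Fin n → Fin N) → Prop) [DecidablePred Q] :
    ((ballsInBoxes n N) {X | Q X}).toReal
      = ((Finset.univ.filter Q).card : ℝ) * ((N : ℝ)⁻¹) ^ n := by
  have hN' : (N : ENNReal) ≠ 0 := by exact_mod_cast hN
  have : IsFiniteMeasure (((N : ENNReal)⁻¹ • (Measure.count : Measure (Fin N)))) :=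
    Measure.smul_finite _ (by simp [hN])
  have h : {X : Fin n → Fin N | Q X} = ((Finset.univ.filter Q : Finset _) : Set _) := by
    ext; simp
  rw [h, ← Measure.real, ballsInBoxes, ← sum_measureReal_singleton]
  simp [Measure.real]

lemma cond_singleton (α : NNReal) (r l : ℕ) :
    ((poissonMeasure α)[|{r}ᶜ]).real {l}
      = (if l = r then 0 else (poissonMeasure α).real {l}) / (1 - (poissonMeasure α).real {r}) := by
  rw [Measure.real, cond_apply (by measurability), ENNReal.toReal_mul, ENNReal.toReal_inv,
    ← Measure.real, probReal_compl_eq_one_sub (by measurability)]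
  by_cases h : l = r
  · subst h; simp
  · have : ({r}ᶜ ∩ {l} : Set ℕ) = {l} := by
      ext x; simp; rintro rfl; exact h
    rw [this, if_neg h, div_eq_inv_mul, Measure.real, Measure.real]

theorem kolchin_exact_formula (n N r k : ℕ) (hn : 1 ≤ n) (hN : 1 ≤ N) (hr : 1 ≤ r)
    (hk : k ≤ N) :
    ((ballsInBoxes n N) {X : Fin n → Fin N |
        (Finset.univ.filter fun i : Fin N =>
          (Finset.univ.filter fun s : Fin n => X s = i).card = r).card = k}).toReal
      = (N.choose k : ℝ) * (((n : ℝ) / N) ^ r * Real.exp (-((n : ℝ) / N)) / r.factorial) ^ k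
          * (1 - ((n : ℝ) / N) ^ r * Real.exp (-((n : ℝ) / N)) / r.factorial) ^ (N - k)
          * condPoissonSumProb ((n : NNReal) / N) r (N - k) ((n : ℤ) - k * r)
          / poissonSumProb ((n : NNReal) / N) N n := by
  have hn0 : (0:ℝ) < n := by exact_mod_cast hn
  have hN0 : (0:ℝ) < N := by exact_mod_cast hN
  set α : NNReal := (n : NNReal) / N with hα
  have hαr : (n : ℝ) / N = (α : ℝ) := by simp [hα]
  have hα0 : (0:ℝ) < α := by rw [← hαr]; positivity
  rw [hαr]
  have hpl : ∀ l, (poissonMeasure α).real {l} = Real.exp (-α) * α ^ l / l.factorial :=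
    poissonMeasure_real_singleton α
  set p : ℕ → ℝ := fun l => Real.exp (-α) * α ^ l / l.factorial with hp
  have hpr : (α : ℝ) ^ r * Real.exp (-α) / r.factorial = p r := by
    simp only [hp]; ring
  rw [hpr]
  have hp0 : 0 < p 0 := by simp only [hp]; positivity
  have hsum : p 0 + p r ≤ 1 := by
    have h := measureReal_union (μ := poissonMeasure α) (s₁ := {0}) (s₂ := {r})
      (by simp; omega) (by measurability)
    rw [hpl, hpl] at h
    have h' : (poissonMeasure α).real ({0} ∪ {r}) ≤ 1 := measureReal_le_one
    simp only [hp]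
    linarith
  have hq : 0 < 1 - p r := by linarith
  have : IsProbabilityMeasure ((poissonMeasure α)[|{r}ᶜ]) := by
    apply cond_isProbabilityMeasure
    intro h0
    have h1 := probReal_compl_eq_one_sub (μ := poissonMeasure α) (s := {r}) (by measurability)
    rw [hpl, Measure.real, h0] at h1
    simp only [ENNReal.toReal_zero] at h1
    exact hq.ne h1
  -- the conditional probability
  have hcond : (1 - p r) ^ (N - k) * condPoissonSumProb α r (N - k) ((n : ℤ) - k * r)
      = if k * r ≤ n then
          ∑ d ∈ Finset.piAntidiag (Finset.univ : Finset (Fin (N - k))) (n - k * r),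
            ∏ i, (if d i = r then 0 else p (d i)) else 0 := by
    unfold condPoissonSumProb
    split_ifs with hkr
    · have hs : {x : Fin (N - k) → ℕ | (∑ i, (x i : ℤ)) = (n : ℤ) - k * r}
          = {x : Fin (N - k) → ℕ | ∑ i, x i = n - k * r} := by
        ext x
        simp only [Set.mem_ofPred_eq]
        zify [hkr]
      rw [hs, pi_sum_prob, Finset.mul_sum]
      refine Finset.sum_congr rfl fun d _ => ?_
      simp only [cond_singleton, hpl]
      rw [Finset.prod_div_distrib, Finset.prod_const, Finset.card_univ, Fintype.card_fin]
      exact mul_div_cancel₀ _ (pow_ne_zero _ hq.ne')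
    · have hs : {x : Fin (N - k) → ℕ | (∑ i, (x i : ℤ)) = (n : ℤ) - k * r} = ∅ := by
        ext x
        simp only [Set.mem_ofPred_eq, Set.mem_empty_iff_false, iff_false]
        have h1 : (0 : ℤ) ≤ ∑ i, (x i : ℤ) := Finset.sum_nonneg fun i _ => by positivity
        have h2 : (n : ℤ) < k * r := by exact_mod_cast not_le.1 hkr
        omega
      rw [hs]; simp
  have hB : poissonSumProb α N n = Real.exp (-α) ^ N * α ^ n / n.factorial * (N : ℝ) ^ n := by
    have h := count_sum (α : ℝ) n N (fun _ => True)
    simp only [Finset.filter_true] at h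
    unfold poissonSumProb
    rw [pi_sum_prob]
    simp only [hpl]
    rw [h]
    simp
  have hG := gf_identity p n N r k hk
  rw [count_sum (α : ℝ) n N (fun c => (Finset.univ.filter fun i => c i = r).card = k)] at hG
  rw [balls_prob _ _ (by omega), mul_assoc _ _ (condPoissonSumProb _ _ _ _), hcond, ← hG, hB, inv_pow]
  field_simp
end

section
/- Fix an integer r ≥ 2. Let (n_k) and (N_k) be sequences of positive integers with n_k → ∞ and N_k → ∞, and set α_k := n_k/N_k and p_{r,k} := α_k^r e^{-α_k}/r!. If α_k → 0 and N_k·p_{r,k} → 0 as k → ∞, then lim_{k→∞} ℙ(μ_r(n_k, N_k) = 1)/(N_k·p_{r,k}) = 1. -/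
open MeasureTheory Finset Filter

/-- `ℙ(μ_r(n,N) = k)`, the probability that exactly `k` of the `N` boxes contain exactly `r`
of the `n` balls. -/
noncomputable def boxCountProb (n N r k : ℕ) : ℝ :=
  ((ballsInBoxes n N) {X : Fin n → Fin N |
      (Finset.univ.filter fun i : Fin N =>
        (Finset.univ.filter fun s : Fin n => X s = i).card = r).card = k}).toReal

/-- Fiber of a box. -/
def fib {n N : ℕ} (X : Fin n → Fin N) (i : Fin N) : Finset (Fin n) :=
  Finset.univ.filter fun s => X s = i

/-- Number of boxes with r balls. -/
def muR {n N : ℕ} (r : ℕ) (X : Fin n → Fin N) : ℕ :=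
  (Finset.univ.filter fun i : Fin N => (fib X i).card = r).card

lemma prob_eq (n N r k : ℕ) (hN : 1 ≤ N) : boxCountProb n N r k =
    ((Finset.univ.filter fun X : Fin n → Fin N => muR r X = k).card : ℝ) / (N : ℝ) ^ n := by
  have h : {X : Fin n → Fin N |
      (Finset.univ.filter fun i : Fin N =>
        (Finset.univ.filter fun s : Fin n => X s = i).card = r).card = k}
      = (((Finset.univ.filter fun X : Fin n → Fin N => muR r X = k) : Finset (Fin n → Fin N)) :
        Set (Fin n → Fin N)) := by
    ext X
    rw [Finset.mem_coe, Finset.mem_filter]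
    simp only [mem_univ, true_and, Set.mem_setOf_eq]
    exact Iff.rfl
  have hfin : IsFiniteMeasure ((N : ENNReal)⁻¹ • (Measure.count : Measure (Fin N))) := by
    refine ⟨?_⟩
    simp only [Measure.smul_apply, smul_eq_mul]
    refine ENNReal.mul_lt_top ?_ (measure_lt_top _ _)
    simp; omega
  rw [boxCountProb, h, ballsInBoxes, ← sum_measure_singleton]
  simp only [Measure.pi_singleton, Measure.smul_apply, Measure.count_singleton]
  simp [div_eq_mul_inv]

lemma card_fib_eq {n N : ℕ} (i : Fin N) (A : Finset (Fin n)) :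
    (Finset.univ.filter fun X : Fin n → Fin N => fib X i = A).card
      = (N - 1) ^ (n - A.card) := by
  have : (Finset.univ.filter fun X : Fin n → Fin N => fib X i = A)
      = Fintype.piFinset fun s => if s ∈ A then {i} else {i}ᶜ := by
    ext X
    simp only [mem_filter, mem_univ, true_and, Fintype.mem_piFinset, fib, Finset.ext_iff]
    refine forall_congr' fun s => ?_
    by_cases hs : s ∈ A <;> simp [hs]
  rw [this, Fintype.card_piFinset]
  simp only [apply_ite Finset.card, card_singleton, card_compl, Fintype.card_fin]
  rw [Finset.prod_ite]
  simp [Finset.filter_not, Finset.card_sdiff]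

lemma card_fib_le {n N : ℕ} (hN : 1 ≤ N) (i j : Fin N) (hij : i ≠ j) (A B : Finset (Fin n)) :
    (Finset.univ.filter fun X : Fin n → Fin N => fib X i = A ∧ fib X j = B).card
      * N ^ (A.card + B.card) ≤ N ^ n := by
  by_cases hAB : Disjoint A B
  · have : (Finset.univ.filter fun X : Fin n → Fin N => fib X i = A ∧ fib X j = B)
      ⊆ Fintype.piFinset fun s => if s ∈ A then {i} else if s ∈ B then {j} else univ := by
      intro X hX
      simp only [mem_filter, mem_univ, true_and, Fintype.mem_piFinset, fib, Finset.ext_iff] at hX ⊢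
      intro s
      have h1 := hX.1 s
      have h2 := hX.2 s
      by_cases hs : s ∈ A <;> by_cases hs' : s ∈ B <;> simp_all
    have h2 := card_le_card this
    rw [Fintype.card_piFinset] at h2
    have h3 : (∏ s : Fin n, (if s ∈ A then ({i} : Finset (Fin N)) else if s ∈ B then {j} else univ).card)
       * N ^ (A.card + B.card) = N ^ n := by
      rw [← card_union_of_disjoint hAB, ← Finset.prod_const]
      have : ∏ _x ∈ A ∪ B, N = ∏ s : Fin n, if s ∈ A ∪ B then N else 1 := by
        rw [Finset.prod_ite_mem, Finset.univ_inter]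
      rw [this, ← Finset.prod_mul_distrib]
      trans ∏ s : Fin n, N
      · refine Finset.prod_congr rfl fun s _ => ?_
        by_cases hs : s ∈ A <;> by_cases hs' : s ∈ B <;> simp [hs, hs']
      · simp
    rw [← h3]
    gcongr
  · have : (Finset.univ.filter fun X : Fin n → Fin N => fib X i = A ∧ fib X j = B) = ∅ := by
      ext X
      simp only [mem_filter, mem_univ, true_and, notMem_empty, iff_false]
      rintro ⟨rfl, rfl⟩
      apply hAB
      rw [Finset.disjoint_left]
      intro s h1 h2
      simp [fib] at h1 h2
      exact hij (h1.symm.trans h2)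
    simp [this]

lemma card_one {n N : ℕ} (r : ℕ) (i : Fin N) :
    (Finset.univ.filter fun X : Fin n → Fin N => (fib X i).card = r).card
      = n.choose r * (N - 1) ^ (n - r) := by
  rw [Finset.card_eq_sum_card_fiberwise (f := fun X => fib X i)
    (t := powersetCard r (univ : Finset (Fin n)))]
  · rw [Finset.sum_congr rfl (g := fun _ => (N - 1) ^ (n - r))]
    · simp
    · intro A hA
      have hA' := (mem_powersetCard.1 hA).2
      rw [← hA', ← card_fib_eq i A, filter_filter]
      congr 1
      ext X
      simp only [mem_filter, mem_univ, true_and]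
      constructor
      · exact fun h => h.2
      · exact fun h => ⟨by rw [h], h⟩
  · intro X hX
    simpa [mem_powersetCard] using hX

lemma card_two {n N : ℕ} (hN : 1 ≤ N) (r : ℕ) (i j : Fin N) (hij : i ≠ j) :
    (Finset.univ.filter fun X : Fin n → Fin N => (fib X i).card = r ∧ (fib X j).card = r).card
      * N ^ (2 * r) ≤ (n.choose r) ^ 2 * N ^ n := by
  rw [Finset.card_eq_sum_card_fiberwise (f := fun X => (fib X i, fib X j))
    (t := powersetCard r (univ : Finset (Fin n)) ×ˢ powersetCard r (univ : Finset (Fin n)))]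
  · rw [Finset.sum_mul]
    refine (Finset.sum_le_card_nsmul _ _ (N ^ n) ?_).trans ?_
    · rintro ⟨A, B⟩ hA
      simp only [mem_product, mem_powersetCard, subset_univ, true_and] at hA
      refine le_trans ?_ (card_fib_le hN i j hij A B)
      rw [hA.1, hA.2, two_mul]
      gcongr
      intro X hX
      simpa using (mem_filter.1 hX).2
    · simp [card_product, sq]
  · intro X hX
    simpa [mem_powersetCard] using hX

lemma sum_mu {n N : ℕ} (r : ℕ) :
    ∑ X : Fin n → Fin N, muR r X = N * (n.choose r * (N - 1) ^ (n - r)) := by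
  simp only [muR, Finset.card_filter]
  rw [Finset.sum_comm]
  simp only [← Finset.card_filter, card_one]
  simp

lemma upper {n N : ℕ} (r : ℕ) :
    (Finset.univ.filter fun X : Fin n → Fin N => muR r X = 1).card
      ≤ N * (n.choose r * (N - 1) ^ (n - r)) := by
  rw [← sum_mu, Finset.card_filter]
  refine Finset.sum_le_sum fun X _ => ?_
  split_ifs <;> omega

lemma lower {n N : ℕ} (hN : 1 ≤ N) (r : ℕ) :
    N * (n.choose r * (N - 1) ^ (n - r)) * N ^ (2 * r) ≤
    (Finset.univ.filter fun X : Fin n → Fin N => muR r X = 1).card * N ^ (2 * r)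
      + N ^ 2 * ((n.choose r) ^ 2 * N ^ n) := by
  have key : ∑ X : Fin n → Fin N, muR r X ≤
      (Finset.univ.filter fun X : Fin n → Fin N => muR r X = 1).card
      + ∑ p ∈ (univ : Finset (Fin N)).offDiag, (Finset.univ.filter fun X : Fin n → Fin N =>
          (fib X p.1).card = r ∧ (fib X p.2).card = r).card := by
    simp only [Finset.card_filter _ (univ : Finset (Fin n → Fin N))]
    rw [Finset.sum_comm, ← Finset.sum_add_distrib]
    refine Finset.sum_le_sum fun X _ => ?_
    rw [← Finset.card_filter]
    have : (univ : Finset (Fin N)).offDiag.filter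
        (fun p => (fib X p.1).card = r ∧ (fib X p.2).card = r)
        = (Finset.univ.filter fun i : Fin N => (fib X i).card = r).offDiag := by
      ext p; simp [mem_offDiag]; tauto
    rw [this, offDiag_card]
    change muR r X ≤ _ + (muR r X * muR r X - muR r X)
    generalize muR r X = m
    split_ifs with h
    · omega
    · rcases m with _ | _ | m
      · simp
      · omega
      · have : (m+1+1) * (m+1+1) = (m+1+1) + (m+1+1) * (m+1) := by ring
        rw [this]
        have : (m+1+1) ≤ (m+1+1) * (m+1) := Nat.le_mul_of_pos_right _ (by omega)
        omega
  rw [sum_mu] at key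
  refine (Nat.mul_le_mul_right _ key).trans ?_
  rw [add_mul, Finset.sum_mul]
  gcongr
  refine (Finset.sum_le_card_nsmul _ _ _ fun p hp => card_two hN r p.1 p.2 (by simpa using hp)).trans ?_
  rw [smul_eq_mul]
  gcongr
  rw [offDiag_card]; simp [sq]

lemma real_bounds {n N r : ℕ} (hN : 1 ≤ N) (hn : 1 ≤ n) (hr : r ≤ n) :
    boxCountProb n N r 1 ≤ N * (((n : ℝ) / N) ^ r / r.factorial) ∧
    N * (((n : ℝ) / N) ^ r / r.factorial) * ((1 - r / n) ^ r * (1 - (n : ℝ) / N)) -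
      (N * (((n : ℝ) / N) ^ r / r.factorial)) ^ 2 ≤ boxCountProb n N r 1 := by
  have hN0 : (0 : ℝ) < N := by exact_mod_cast hN
  have hn0 : (0 : ℝ) < n := by exact_mod_cast hn
  have hrn : (r : ℝ) ≤ n := by exact_mod_cast hr
  have hN1 : (1 : ℝ) ≤ N := by exact_mod_cast hN
  have hf : (0 : ℝ) < r.factorial := by exact_mod_cast r.factorial_pos
  rw [prob_eq _ _ _ _ hN]
  have hu := upper (n := n) (N := N) r
  have hl := lower (n := n) hN r
  generalize (Finset.univ.filter fun X : Fin n → Fin N => muR r X = 1).card = c at *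
  have hu' : (c : ℝ) ≤ N * (n.choose r * ((N : ℝ) - 1) ^ (n - r)) := by
    have := (Nat.cast_le (α := ℝ)).2 hu
    push_cast [Nat.cast_sub hN] at this
    exact this
  have hl' : (N : ℝ) * (n.choose r * ((N : ℝ) - 1) ^ (n - r)) * N ^ (2 * r) ≤
      c * N ^ (2 * r) + N ^ 2 * ((n.choose r) ^ 2 * N ^ n) := by
    have := (Nat.cast_le (α := ℝ)).2 hl
    push_cast [Nat.cast_sub hN] at this
    exact this
  have hC : (n.choose r : ℝ) ≤ (n : ℝ) ^ r / r.factorial := Nat.choose_le_pow_div r n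
  have hC2 : (n : ℝ) ^ r / r.factorial * (1 - r / n) ^ r ≤ n.choose r := by
    have h1 := Nat.pow_sub_le_descFactorial n r
    rw [Nat.descFactorial_eq_factorial_mul_choose] at h1
    have h2 := (Nat.cast_le (α := ℝ)).2 h1
    push_cast [Nat.cast_sub (by omega : r ≤ n + 1)] at h2
    rw [div_mul_eq_mul_div, div_le_iff₀ hf, ← mul_pow, mul_comm (n.choose r : ℝ)]
    refine le_trans ?_ h2
    have : (n : ℝ) * (1 - r / n) = n - r := by field_simp
    rw [this]
    gcongr
    · linarith
  have hpow : (N : ℝ) ^ n = N ^ (n - r) * N ^ r := by rw [← pow_add, Nat.sub_add_cancel hr]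
  have hq : ((N : ℝ) - 1) ^ (n - r) / N ^ (n - r) = (1 - 1 / N) ^ (n - r) := by
    rw [← div_pow]; congr 1; field_simp
  have hE : (N : ℝ) * (n.choose r * ((N : ℝ) - 1) ^ (n - r)) / N ^ n
      = N * (n.choose r / N ^ r * (1 - 1 / N) ^ (n - r)) := by
    rw [← hq, hpow]; field_simp
  have hinv : (1 : ℝ) / N ≤ 1 := by rw [div_le_one hN0]; exact hN1
  have hinv0 : (0 : ℝ) < 1 / N := by positivity
  have hq1 : (1 - 1 / (N : ℝ)) ^ (n - r) ≤ 1 := pow_le_one₀ (by linarith) (by linarith)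
  have hq2 : 1 - (n : ℝ) / N ≤ (1 - 1 / (N : ℝ)) ^ (n - r) := by
    have := one_add_mul_le_pow (a := -(1 / (N : ℝ))) (by linarith) (n - r)
    rw [← sub_eq_add_neg] at this
    refine le_trans ?_ this
    push_cast [Nat.cast_sub hr]
    have h5 : 0 ≤ (r : ℝ) * (1 / N) := by positivity
    have h6 : (n : ℝ) / N = n * (1 / N) := by ring
    rw [h6]; nlinarith
  have hq0 : 0 ≤ (1 - 1 / (N : ℝ)) ^ (n - r) := pow_nonneg (by linarith) _
  have hform : ((n : ℝ) / N) ^ r / r.factorial = ((n : ℝ) ^ r / r.factorial) / N ^ r := by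
    rw [div_pow]; ring
  have hrn' : 0 ≤ (1 - (r : ℝ) / n) ^ r := by
    apply pow_nonneg; rw [sub_nonneg, div_le_one hn0]; exact hrn
  rw [hform]
  constructor
  · calc (c : ℝ) / N ^ n ≤ N * (n.choose r * ((N : ℝ) - 1) ^ (n - r)) / N ^ n := by gcongr
      _ = N * (n.choose r / N ^ r * (1 - 1 / N) ^ (n - r)) := hE
      _ ≤ N * ((n : ℝ) ^ r / r.factorial / N ^ r * 1) := by gcongr
      _ = _ := by ring
  · have h7 : (N : ℝ) * (n.choose r * ((N : ℝ) - 1) ^ (n - r)) / N ^ n ≤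
      c / N ^ n + (N * (n.choose r / N ^ r)) ^ 2 := by
      rw [← sub_nonneg] at hl' ⊢
      have : c / N ^ n + (N * ((n.choose r : ℝ) / N ^ r)) ^ 2 - (N : ℝ) * (n.choose r * ((N : ℝ) - 1) ^ (n - r)) / N ^ n
        = (c * N ^ (2 * r) + N ^ 2 * ((n.choose r) ^ 2 * N ^ n) - (N : ℝ) * (n.choose r * ((N : ℝ) - 1) ^ (n - r)) * N ^ (2 * r)) / (N ^ (2 * r) * N ^ n) := by
        rw [two_mul, pow_add]
        field_simp
      rw [this]
      positivity
    rw [hE] at h7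
    have h8 : (N * ((n.choose r : ℝ) / N ^ r)) ^ 2 ≤ (N * ((n : ℝ) ^ r / r.factorial / N ^ r)) ^ 2 := by
      gcongr
    have h9 : N * ((n : ℝ) ^ r / r.factorial / N ^ r) * ((1 - r / n) ^ r * (1 - (n : ℝ) / N))
       ≤ N * (n.choose r / N ^ r * (1 - 1 / N) ^ (n - r)) := by
      calc _ = N * (((n : ℝ) ^ r / r.factorial * (1 - r / n) ^ r) / N ^ r * (1 - (n : ℝ) / N)) := by ring
        _ ≤ N * (((n : ℝ) ^ r / r.factorial * (1 - r / n) ^ r) / N ^ r * (1 - 1 / N) ^ (n - r)) := by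
          gcongr
        _ ≤ _ := by gcongr
    linarith

/-- For fixed `r ≥ 2`, if `n_k, N_k → ∞`, `α_k := n_k/N_k → 0` and
`N_k·p_{r,k} → 0` where `p_{r,k} := α_k^r e^{-α_k}/r!`, then
`ℙ(μ_r(n_k,N_k) = 1)/(N_k·p_{r,k}) → 1`. -/
theorem boxCountProb_one_asymptotic (r : ℕ) (hr : 2 ≤ r) (n N : ℕ → ℕ)
    (hn1 : ∀ k, 1 ≤ n k) (hN1 : ∀ k, 1 ≤ N k)
    (hn : Tendsto (fun k => (n k : ℝ)) atTop atTop)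
    (hN : Tendsto (fun k => (N k : ℝ)) atTop atTop)
    (hα : Tendsto (fun k => (n k : ℝ) / (N k : ℝ)) atTop (nhds 0))
    (hNp : Tendsto (fun k => (N k : ℝ) *
        (((n k : ℝ) / (N k : ℝ)) ^ r * Real.exp (-((n k : ℝ) / (N k : ℝ))) / r.factorial))
      atTop (nhds 0)) :
    Tendsto (fun k => boxCountProb (n k) (N k) r 1 /
        ((N k : ℝ) *
          (((n k : ℝ) / (N k : ℝ)) ^ r * Real.exp (-((n k : ℝ) / (N k : ℝ))) / r.factorial)))
      atTop (nhds 1) := by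
  have hexp : Tendsto (fun k => Real.exp ((n k : ℝ) / (N k : ℝ))) atTop (nhds 1) := by
    simpa using hα.rexp
  have hrn : Tendsto (fun k => (r : ℝ) / (n k : ℝ)) atTop (nhds 0) :=
    tendsto_const_nhds.div_atTop hn
  have hlow : Tendsto (fun k => (1 - (r : ℝ) / (n k : ℝ)) ^ r * (1 - (n k : ℝ) / (N k : ℝ)) *
      Real.exp ((n k : ℝ) / (N k : ℝ)) - (N k : ℝ) *
        (((n k : ℝ) / (N k : ℝ)) ^ r * Real.exp (-((n k : ℝ) / (N k : ℝ))) / r.factorial) *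
        Real.exp ((n k : ℝ) / (N k : ℝ)) ^ 2) atTop (nhds 1) := by
    have := ((((hrn.const_sub 1).pow r).mul (hα.const_sub 1)).mul hexp).sub
      (hNp.mul (hexp.pow 2))
    simpa using this
  have hge : ∀ᶠ k in atTop, r ≤ n k := by
    filter_upwards [hn.eventually_ge_atTop (r : ℝ)] with k hk
    exact_mod_cast hk
  refine tendsto_of_tendsto_of_tendsto_of_le_of_le' hlow hexp ?_ ?_
  all_goals
    filter_upwards [hge] with k hk
    obtain ⟨h1, h2⟩ := real_bounds (hN1 k) (hn1 k) hk
    have hN0 : (0 : ℝ) < N k := by exact_mod_cast hN1 k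
    have hn0 : (0 : ℝ) < n k := by exact_mod_cast hn1 k
    have hf : (0 : ℝ) < r.factorial := by exact_mod_cast r.factorial_pos
    have hQ : (N k : ℝ) * (((n k : ℝ) / (N k : ℝ)) ^ r / r.factorial) =
      (N k : ℝ) *
        (((n k : ℝ) / (N k : ℝ)) ^ r * Real.exp (-((n k : ℝ) / (N k : ℝ))) / r.factorial) *
        Real.exp ((n k : ℝ) / (N k : ℝ)) := by
      rw [Real.exp_neg]
      field_simp
    have hpos : 0 < (N k : ℝ) *
        (((n k : ℝ) / (N k : ℝ)) ^ r * Real.exp (-((n k : ℝ) / (N k : ℝ))) / r.factorial) := by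
      positivity
    rw [hQ] at h1 h2
    generalize (N k : ℝ) *
        (((n k : ℝ) / (N k : ℝ)) ^ r * Real.exp (-((n k : ℝ) / (N k : ℝ))) / r.factorial) = Q at *
  · rw [le_div_iff₀ hpos]
    refine le_trans (le_of_eq ?_) h2
    ring
  · rw [div_le_iff₀ hpos]
    linarith
end

section
/- Let d ≥ 1, ε > 0 and C > 0, and let N : ℕ^d → [0,∞) satisfy N_m ≤ C·2^{(1-ε)|m|} for all m ∈ ℕ^d, where |m| := m_1+⋯+m_d. Then Σ_{j=1}^∞ Σ_{m∈ℕ^d : 2^{j-1} ≤ |m| ≤ 2^j} Σ_{l∈ℕ^d : |l| ≥ 2^j/ε} N_m·N_l·∏_{i=1}^d (2^{m_i}+2^{l_i})^{-1} < ∞. -/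
open Finset ENNReal

lemma aux_geom (r : ℝ≥0∞) (hr : r < 1) : ∑' n : ℕ, r ^ n < ⊤ := by
  rw [ENNReal.tsum_geometric, ENNReal.inv_lt_top]
  exact tsub_pos_of_lt hr

lemma aux_multi (r : ℝ≥0∞) (hr : r < 1) (d : ℕ) :
    ∑' m : Fin d → ℕ, ∏ i, r ^ (m i) < ⊤ := by
  induction d with
  | zero => simp [tsum_fintype]
  | succ d ih =>
    rw [← (Fin.consEquiv (fun _ : Fin (d+1) => ℕ)).tsum_eq, ENNReal.tsum_prod']
    simp only [Fin.consEquiv, Equiv.coe_fn_mk, Fin.prod_univ_succ, Fin.cons_zero, Fin.cons_succ]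
    simp only [ENNReal.tsum_mul_left, ENNReal.tsum_mul_right]
    exact ENNReal.mul_lt_top (aux_geom r hr) ih

lemma aux_exp (ε η δ x y j : ℝ) (hε : 0 < ε) (hδ1 : δ ≤ 1) (hδ2 : δ ≤ ε / 2)
    (h1 : η ≤ ε / 4) (h2 : η ≤ δ * ε) (hη : 0 ≤ η) (hy : 0 ≤ y) (hj : 0 ≤ j) (hjx : j ≤ x)
    (hxy : x ≤ ε * y) :
    (1 - ε) * x + (1 - ε) * y - y ≤ -η * (j + x + y) := by
  have hx : 0 ≤ x := hj.trans hjx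
  have a1 : 0 ≤ (1 - δ) * (ε * y - x) := mul_nonneg (by linarith) (by linarith)
  have a2 : η * y ≤ δ * ε * y := mul_le_mul_of_nonneg_right h2 hy
  have a3 : η * x ≤ ε / 4 * x := mul_le_mul_of_nonneg_right h1 hx
  have a4 : η * j ≤ η * x := mul_le_mul_of_nonneg_left hjx hη
  have a5 : δ * x ≤ ε / 2 * x := mul_le_mul_of_nonneg_right hδ2 hx
  nlinarith

lemma aux_prod (d : ℕ) (r : ℝ) (m : Fin d → ℕ) :
    ∏ i, ((2:ℝ) ^ r) ^ (m i) = (2:ℝ) ^ (r * ∑ i, (m i : ℝ)) := by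
  rw [Finset.mul_sum, Real.rpow_sum_of_pos (by norm_num)]
  refine Finset.prod_congr rfl fun i _ => ?_
  rw [Real.rpow_mul (by norm_num), Real.rpow_natCast]

/-- The off-diagonal series estimate: if `N_m ≤ C·2^{(1-ε)|m|}`, then
`Σ_{j≥1} Σ_{2^{j-1} ≤ |m| ≤ 2^j} Σ_{|l| ≥ 2^j/ε} N_m N_l ∏_i (2^{m_i}+2^{l_i})⁻¹ < ∞`. -/
theorem offdiagonal_series_estimate
    (d : ℕ) (hd : 1 ≤ d) (ε C : ℝ) (hε : 0 < ε) (hC : 0 < C)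
    (N : (Fin d → ℕ) → ℝ) (hN0 : ∀ m, 0 ≤ N m)
    (hN : ∀ m : Fin d → ℕ, N m ≤ C * (2 : ℝ) ^ ((1 - ε) * ∑ i, (m i : ℝ))) :
    (∑' (j : ℕ), ∑' (m : Fin d → ℕ), ∑' (l : Fin d → ℕ),
        if 1 ≤ j ∧ (2 : ℝ) ^ (j - 1) ≤ ∑ i, (m i : ℝ) ∧ (∑ i, (m i : ℝ)) ≤ (2 : ℝ) ^ j
            ∧ (2 : ℝ) ^ j / ε ≤ ∑ i, (l i : ℝ) then
          ENNReal.ofReal (N m * N l * ∏ i, ((2 : ℝ) ^ (m i) + (2 : ℝ) ^ (l i))⁻¹)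
        else 0) < ⊤ := by
  set δ : ℝ := min (ε / 2) 1 with hδ
  have hδ0 : 0 < δ := lt_min (by linarith) one_pos
  set η : ℝ := min (ε / 4) (δ * ε) with hηd
  have hη : 0 < η := lt_min (by linarith) (mul_pos hδ0 hε)
  set q : ℝ := (2:ℝ) ^ (-η) with hq
  have hq0 : 0 < q := Real.rpow_pos_of_pos (by norm_num) _
  have hq1 : q < 1 := Real.rpow_lt_one_of_one_lt_of_neg (by norm_num) (by linarith)
  set r : ℝ≥0∞ := ENNReal.ofReal q with hr
  have hr1 : r < 1 := by
    rw [hr, ← ENNReal.ofReal_one]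
    exact (ENNReal.ofReal_lt_ofReal_iff one_pos).2 hq1
  have key : ∀ (j : ℕ) (m l : Fin d → ℕ),
      (if 1 ≤ j ∧ (2 : ℝ) ^ (j - 1) ≤ ∑ i, (m i : ℝ) ∧ (∑ i, (m i : ℝ)) ≤ (2 : ℝ) ^ j
            ∧ (2 : ℝ) ^ j / ε ≤ ∑ i, (l i : ℝ) then
          ENNReal.ofReal (N m * N l * ∏ i, ((2 : ℝ) ^ (m i) + (2 : ℝ) ^ (l i))⁻¹)
        else 0) ≤ ENNReal.ofReal (C * C) * (r ^ j * ((∏ i, r ^ (m i)) * ∏ i, r ^ (l i))) := by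
    intro j m l
    split_ifs with h
    swap
    · exact zero_le
    obtain ⟨hj, h1, h2, h3⟩ := h
    have e : ENNReal.ofReal (C * C) * (r ^ j * ((∏ i, r ^ (m i)) * ∏ i, r ^ (l i)))
        = ENNReal.ofReal ((C * C) * (q ^ j * ((∏ i, q ^ (m i)) * ∏ i, q ^ (l i)))) := by
      rw [ENNReal.ofReal_mul (p := C * C) (by positivity), ENNReal.ofReal_mul (p := q ^ j) (by positivity),
        ENNReal.ofReal_mul (p := ∏ i, q ^ (m i)) (by positivity), ENNReal.ofReal_pow hq0.le,
        ENNReal.ofReal_prod_of_nonneg (fun i _ => by positivity),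
        ENNReal.ofReal_prod_of_nonneg (fun i _ => by positivity)]
      simp only [ENNReal.ofReal_pow hq0.le, hr]
    rw [e]
    apply ENNReal.ofReal_le_ofReal
    have hP : ∏ i, ((2 : ℝ) ^ (m i) + (2 : ℝ) ^ (l i))⁻¹ ≤ (2:ℝ) ^ ((-1) * ∑ i, (l i : ℝ)) := by
      rw [← aux_prod]
      refine Finset.prod_le_prod (fun i _ => by positivity) fun i _ => ?_
      rw [Real.rpow_neg_one, inv_pow]
      apply inv_anti₀ (by positivity)
      have : (0:ℝ) < 2 ^ (m i) := by positivity
      linarith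
    have hjx : (j : ℝ) ≤ ∑ i, (m i : ℝ) := by
      refine le_trans ?_ h1
      have : j ≤ 2 ^ (j - 1) := by
        have := Nat.lt_two_pow_self (n := j - 1)
        omega
      exact_mod_cast this
    have hxy : ∑ i, (m i : ℝ) ≤ ε * ∑ i, (l i : ℝ) := by
      rw [div_le_iff₀ hε] at h3
      linarith
    have hy : 0 ≤ ∑ i, (l i : ℝ) := by positivity
    have hE := aux_exp ε η δ _ _ j hε (min_le_right _ _) (min_le_left _ _) (min_le_left _ _)
      (min_le_right _ _) hη.le hy (Nat.cast_nonneg j) hjx hxy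
    rw [hq, aux_prod, aux_prod, ← Real.rpow_natCast ((2:ℝ) ^ (-η)) j,
      ← Real.rpow_mul (by norm_num), ← Real.rpow_add (by norm_num), ← Real.rpow_add (by norm_num)]
    calc _ ≤ (C * (2 : ℝ) ^ ((1 - ε) * ∑ i, (m i : ℝ))) * (C * (2 : ℝ) ^ ((1 - ε) * ∑ i, (l i : ℝ)))
          * (2:ℝ) ^ ((-1) * ∑ i, (l i : ℝ)) := by
          refine mul_le_mul (mul_le_mul (hN m) (hN l) (hN0 l) (by positivity)) hP
            (Finset.prod_nonneg fun i _ => by positivity) (by positivity)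
      _ = C * C * (2:ℝ) ^ ((1 - ε) * (∑ i, (m i : ℝ)) + (1 - ε) * (∑ i, (l i : ℝ))
            + (-1) * ∑ i, (l i : ℝ)) := by
          rw [Real.rpow_add (by norm_num), Real.rpow_add (by norm_num)]
          ring
      _ ≤ _ := by
          refine mul_le_mul_of_nonneg_left ?_ (by positivity)
          apply Real.rpow_le_rpow_of_exponent_le (by norm_num)
          linarith
  refine lt_of_le_of_lt (ENNReal.tsum_le_tsum fun j => ENNReal.tsum_le_tsum fun m =>
    ENNReal.tsum_le_tsum fun l => key j m l) ?_
  simp only [ENNReal.tsum_mul_left, ENNReal.tsum_mul_right]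
  exact ENNReal.mul_lt_top ENNReal.ofReal_lt_top (ENNReal.mul_lt_top (aux_geom r hr1)
    (ENNReal.mul_lt_top (aux_multi r hr1 d) (aux_multi r hr1 d)))
end
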